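/- Let n ≥ 1, let λ > 0, let f : ℝ^n → ℝ be a bounded Lipschitz function, and let g : ℝ^n → ℝ be a smooth positive bounded function with bounded second derivatives and ∫ g dγ = 1. Then ∫ (Q_1 f) g dγ − ∫ f dγ ≤ λ · ∫ g log g dγ + n(1 − λ + λ log λ) + (1/2)(1 − λ) ∫ Δg dγ (dual form of the refined dimensional Talagrand transportation inequality for the standard Gaussian measure; the case λ = 1 is the dual form of the classical Talagrand inequality). -/

import Mathlib

open MeasureTheory Real

noncomputable def gaussianMeasure (n : ℕ) : Measure (EuclideanSpace ℝ (Fin n)) :=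
  volume.withDensity fun x => ENNReal.ofReal ((2 * π) ^ (-(n : ℝ) / 2) * Real.exp (-‖x‖ ^ 2 / 2))

/-- Hopf-Lax (Hamilton-Jacobi) semigroup on `ℝ^n`. -/
noncomputable def hopfLax (n : ℕ) (t : ℝ) (f : EuclideanSpace ℝ (Fin n) → ℝ)
    (x : EuclideanSpace ℝ (Fin n)) : ℝ :=
  ⨅ y : EuclideanSpace ℝ (Fin n), (f y + ‖x - y‖ ^ 2 / (2 * t))

/-- Laplacian on `ℝ^n` as the sum of second derivatives in the coordinate directions. -/
noncomputable def laplacian (n : ℕ) (f : EuclideanSpace ℝ (Fin n) → ℝ)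
    (x : EuclideanSpace ℝ (Fin n)) : ℝ :=
  ∑ i : Fin n,
    fderiv ℝ (fderiv ℝ f) x (EuclideanSpace.single i 1) (EuclideanSpace.single i 1)

open Filter Topology ProbabilityTheory Set

/-- A positive continuous probability density on the line can be pushed forward to the restriction
of a positive continuous function to `(-R, R)` by a differentiable increasing map. -/
theorem exists_transport_to_interval {w p : ℝ → ℝ} (hw : Continuous w) (hw0 : ∀ y, 0 < w y)
    (hwi : Integrable w) (hw1 : ∫ y, w y = 1) (hp : Continuous p) (hp0 : ∀ x, 0 < p x)
    {R : ℝ} (hR : 0 < R) :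
    ∃ T : ℝ → ℝ, ∀ y, T y ∈ Icc (-R) R ∧
      HasDerivAt T ((∫ x in (-R)..R, p x) * w y / p (T y)) y := by
  set Z := ∫ x in (-R)..R, p x with hZ
  have hZ0 : 0 < Z := intervalIntegral.intervalIntegral_pos_of_pos
    (hp.intervalIntegrable _ _) hp0 (by linarith)
  let G : ℝ → ℝ := fun x => ∫ t in (-R)..x, p t
  have hG : ∀ x, HasStrictDerivAt G (p x) x := fun x => hp.integral_hasStrictDerivAt _ _
  have hGc : Continuous G := continuous_iff_continuousAt.2 fun x => (hG x).hasDerivAt.continuousAt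
  have hGm : StrictMono G := strictMono_of_deriv_pos fun x => by
    rw [(hG x).hasDerivAt.deriv]; exact hp0 x
  have hGo : IsOpenEmbedding G := .of_continuous_injective_isOpenMap hGc hGm.injective
    (isOpenMap_of_hasStrictDerivAt hG fun x => (hp0 x).ne')
  let W : ℝ → ℝ := fun y => ∫ t in Iic y, w t
  have hW : ∀ y, HasDerivAt W (w y) y := by
    intro y
    have h1 : W = fun y => (∫ t in Iic 0, w t) + ∫ t in (0:ℝ)..y, w t := by
      funext y
      have := intervalIntegral.integral_Iic_sub_Iic (μ := volume) (f := w) (a := 0) (b := y)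
        hwi.integrableOn hwi.integrableOn
      simp only [W]; linarith
    rw [h1]
    exact ((hw.integral_hasStrictDerivAt 0 y).hasDerivAt).const_add _
  have hpos : ∀ s : Set ℝ, volume s ≠ 0 → 0 < ∫ t in s, w t := by
    intro s hs
    rw [setIntegral_pos_iff_support_of_nonneg_ae (.of_forall fun t => (hw0 t).le)
      hwi.integrableOn, Function.support_eq_univ fun t => (hw0 t).ne', univ_inter]
    exact pos_iff_ne_zero.2 hs
  have hW0 : ∀ y, 0 < W y := fun y => hpos _ (by simp)
  have hW1 : ∀ y, W y < 1 := by
    intro y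
    have h1 := hpos (Ioi y) (by simp)
    have h2 := intervalIntegral.integral_Iic_add_Ioi (μ := volume) (f := w) (b := y)
      hwi.integrableOn hwi.integrableOn
    simp only [W]; linarith
  have hGl : G (-R) = 0 := by simp [G]
  have hGr : G R = Z := rfl
  have hex : ∀ y, ∃ x ∈ Icc (-R) R, G x = Z * W y := by
    intro y
    refine intermediate_value_Icc (by linarith) hGc.continuousOn ?_
    rw [hGl, hGr]
    exact ⟨by have := hW0 y; positivity, by nlinarith [hW1 y]⟩
  let e := hGo.toOpenPartialHomeomorph
  have hesymm : ∀ x, e.symm (G x) = x := fun x => e.left_inv (x := x) (by simp [e])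
  refine ⟨fun y => e.symm (Z * W y), fun y => ?_⟩
  obtain ⟨x, hx, hxy⟩ := hex y
  have hTx : e.symm (Z * W y) = x := by rw [← hxy, hesymm]
  refine ⟨by simpa only [hTx] using hx, ?_⟩
  have h1 : HasDerivAt e.symm (p x)⁻¹ (Z * W y) := by
    refine e.hasDerivAt_symm ?_ (hp0 x).ne' ?_
    · rw [← hxy]; exact e.map_source (x := x) (by simp [e])
    · rw [hTx]; exact (hG x).hasDerivAt
  have h2 := h1.comp y ((hW y).const_mul Z)
  simp only [hTx]
  exact h2.congr_deriv (by rw [div_eq_mul_inv, mul_comm])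

/-- Gaussian integration by parts for bounded functions with bounded derivative. -/
theorem integral_deriv_sub_id_mul_gaussianReal {T T' : ℝ → ℝ} {R M : ℝ}
    (hT : ∀ y, HasDerivAt T (T' y) y) (hR : ∀ y, |T y| ≤ R) (hM : ∀ y, |T' y| ≤ M) :
    Integrable (fun y => T' y - y * T y) (gaussianReal 0 1) ∧
      ∫ y, (T' y - y * T y) ∂gaussianReal 0 1 = 0 := by
  have hTc : Continuous T := continuous_iff_continuousAt.2 fun y => (hT y).continuousAt
  have hT'm : Measurable T' := by
    have : T' = deriv T := funext fun y => (hT y).deriv.symm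
    rw [this]; exact measurable_deriv T
  have hdiff : Integrable (fun y => T' y - y * T y) (gaussianReal 0 1) := by
    refine Integrable.sub ?_ ?_
    · exact Integrable.of_bound hT'm.aestronglyMeasurable M (.of_forall hM)
    · have hid : Integrable (fun y : ℝ => y) (gaussianReal 0 1) :=
        (memLp_id_gaussianReal 1).integrable le_rfl
      exact hid.mul_bdd (c := R) hTc.aestronglyMeasurable (.of_forall hR)
  refine ⟨hdiff, ?_⟩
  let w : ℝ → ℝ := gaussianPDFReal 0 1
  have hw : ∀ y, HasDerivAt w (-y * w y) y := by
    intro y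
    have h1 : HasDerivAt (fun x : ℝ => -(x - 0) ^ 2 / (2 * ((1 : NNReal) : ℝ))) (-y) y := by
      have := (((hasDerivAt_id y).sub_const (0 : ℝ)).pow 2).neg.div_const
        (2 * ((1 : NNReal) : ℝ))
      exact this.congr_deriv (by simp [neg_div])
    have h2 := h1.exp.const_mul (√(2 * π * ((1 : NNReal) : ℝ)))⁻¹
    exact h2.congr_deriv (by simp only [w, gaussianPDFReal]; ring)
  have hderiv : ∀ y, HasDerivAt (fun y => T y * w y) (w y • (T' y - y * T y)) y := by
    intro y
    exact ((hT y).mul (hw y)).congr_deriv (by simp only [smul_eq_mul]; ring)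
  have hwlim : ∀ l : Filter ℝ, Tendsto (fun y : ℝ => y ^ 2) l atTop →
      Tendsto (fun y => T y * w y) l (𝓝 0) := by
    intro l hl
    have hw0 : Tendsto w l (𝓝 0) := by
      have h1 : Tendsto (fun y : ℝ => -(y - 0) ^ 2 / (2 * ((1 : NNReal) : ℝ))) l atBot := by
        have := tendsto_neg_atTop_atBot.comp (hl.atTop_div_const (r := 2) (by norm_num))
        refine this.congr fun y => ?_
        simp [neg_div]
      have := (tendsto_exp_atBot.comp h1).const_mul (√(2 * π * ((1 : NNReal) : ℝ)))⁻¹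
      rwa [mul_zero] at this
    refine squeeze_zero_norm (a := fun y => R * w y) (fun y => ?_) (by simpa using hw0.const_mul R)
    rw [norm_mul, norm_of_nonneg (gaussianPDFReal_nonneg 0 1 y)]
    exact mul_le_mul_of_nonneg_right (hR y) (gaussianPDFReal_nonneg 0 1 y)
  rw [integral_gaussianReal_eq_integral_smul one_ne_zero]
  have hdiff' : Integrable (fun y => w y • (T' y - y * T y)) := by
    rw [gaussianReal_of_var_ne_zero 0 one_ne_zero] at hdiff
    have := (integrable_withDensity_iff_integrable_smul₀'
      (measurable_gaussianPDF 0 1).aemeasurable (.of_forall fun y => by simp [gaussianPDF])).1 hdiff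
    refine this.congr (.of_forall fun y => ?_)
    simp [w, gaussianPDF, ENNReal.toReal_ofReal (gaussianPDFReal_nonneg 0 1 y)]
  rw [integral_of_hasDerivAt_of_tendsto hderiv hdiff' (hwlim _ ?_) (hwlim _ ?_), sub_zero]
  · have := (tendsto_pow_atTop (α := ℝ) two_ne_zero).comp tendsto_neg_atBot_atTop
    refine this.congr fun y => by simp
  · exact tendsto_pow_atTop two_ne_zero

theorem integral_sq_gaussianReal (v : NNReal) :
    Integrable (fun x : ℝ => x ^ 2) (gaussianReal 0 v) ∧ ∫ x, x ^ 2 ∂gaussianReal 0 v = v := by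
  refine ⟨(memLp_id_gaussianReal 2).integrable_sq, ?_⟩
  have h := variance_fun_id_gaussianReal (μ := 0) (v := v)
  rw [variance_eq_integral (by fun_prop)] at h
  simpa using h

/-- Dual form of the dimensional Talagrand inequality on the line. -/
theorem log_integral_exp_le_of_real {v : NNReal} (hv : v ≠ 0) {q f : ℝ → ℝ} (hq : Continuous q)
    (hf : Continuous f) {A B : ℝ} (hqA : ∀ x, |q x| ≤ A) (hfB : ∀ y, |f y| ≤ B)
    (h : ∀ x y, q x - f y ≤ (x - y) ^ 2 / 2) :
    v * log (∫ x, exp (q x / v) ∂gaussianReal 0 v) ≤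
      ∫ y, f y ∂gaussianReal 0 1 + (1 - v + v * log v) / 2 := by
  have hv0 : (0 : ℝ) < v := by positivity
  set K := ∫ y, f y ∂gaussianReal 0 1 + (1 - v + v * log v) / 2 with hK
  let w : ℝ → ℝ := gaussianPDFReal 0 1
  let p : ℝ → ℝ := fun x => gaussianPDFReal 0 v x * exp (q x / v)
  have hpdfc : ∀ u : NNReal, Continuous (gaussianPDFReal 0 u) := fun u => by
    simp only [gaussianPDFReal_def]; fun_prop
  have hp : Continuous p := (hpdfc v).mul (by fun_prop)
  have hp0 : ∀ x, 0 < p x := fun x => mul_pos (gaussianPDFReal_pos 0 v x hv) (exp_pos _)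
  have hpi : Integrable p := by
    refine (integrable_gaussianPDFReal 0 v).mul_bdd (c := exp (A / v))
      (by fun_prop) (.of_forall fun x => ?_)
    rw [norm_of_nonneg (exp_pos _).le]
    have := (abs_le.1 (hqA x)).2
    gcongr
  have hlogw : ∀ y, log (w y) = - y ^ 2 / 2 - log (2 * π) / 2 := by
    intro y
    simp only [w, gaussianPDFReal]
    rw [log_mul (by positivity) (exp_ne_zero _), log_inv, log_exp, log_sqrt (by positivity)]
    simp; ring
  have hlogp : ∀ x, v * log (p x) = q x - x ^ 2 / 2 - v * (log (2 * π) + log v) / 2 := by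
    intro y
    simp only [p, gaussianPDFReal]
    rw [log_mul (by positivity) (exp_ne_zero _), log_mul (by positivity) (exp_ne_zero _), log_inv,
      log_exp, log_exp, log_sqrt (by positivity), log_mul (by positivity) (by positivity)]
    field_simp; ring
  have hkey : ∀ R : ℝ, 0 < R → (∫ x in (-R)..R, p x) ≤ exp (K / v) := by
    intro R hR
    obtain ⟨T, hT⟩ := exists_transport_to_interval (w := w) (hpdfc 1)
      (fun y => gaussianPDFReal_pos 0 1 y one_ne_zero) (integrable_gaussianPDFReal 0 1)
      (integral_gaussianPDFReal_eq_one 0 one_ne_zero) hp hp0 hR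
    set Z := ∫ x in (-R)..R, p x with hZ
    have hZ0 : 0 < Z := intervalIntegral.intervalIntegral_pos_of_pos
      (hp.intervalIntegrable _ _) hp0 (by linarith)
    have hw0 : ∀ y, 0 < w y := fun y => gaussianPDFReal_pos 0 1 y one_ne_zero
    let T' : ℝ → ℝ := fun y => Z * w y / p (T y)
    have hT'0 : ∀ y, 0 < T' y := fun y => div_pos (mul_pos hZ0 (hw0 y)) (hp0 _)
    obtain ⟨x₀, -, hx₀⟩ := isCompact_Icc.exists_isMinOn (s := Icc (-R) R)
      ⟨0, by constructor <;> linarith⟩ hp.continuousOn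
    have hw1 : ∀ y, w y ≤ w 0 := by
      intro y
      simp only [w, gaussianPDFReal]
      refine mul_le_mul_of_nonneg_left (exp_le_exp.2 ?_) (by positivity)
      simp only [sub_zero, NNReal.coe_one]
      nlinarith [sq_nonneg y]
    have hT'M : ∀ y, |T' y| ≤ Z * w 0 / p x₀ := by
      intro y
      rw [abs_of_pos (hT'0 y)]
      exact div_le_div₀ (mul_pos hZ0 (hw0 0)).le (mul_le_mul_of_nonneg_left (hw1 y) hZ0.le)
        (hp0 _) (hx₀ (hT y).1)
    obtain ⟨hi, hi0⟩ := integral_deriv_sub_id_mul_gaussianReal (fun y => (hT y).2)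
      (fun y => abs_le.2 (hT y).1) hT'M
    obtain ⟨hsq, hsq1⟩ := integral_sq_gaussianReal 1
    have hfi : Integrable f (gaussianReal 0 1) :=
      Integrable.of_bound hf.aestronglyMeasurable B (.of_forall hfB)
    have hpt : ∀ y, v * log Z ≤ ((T' y - y * T y) + f y) + (1 + v) / 2 * y ^ 2 +
        (v / 2 * log v - v) := by
      intro y
      have h1 : log (T' y) = log Z + log (w y) - log (p (T y)) := by
        rw [log_div (mul_pos hZ0 (hw0 y)).ne' (hp0 _).ne', log_mul hZ0.ne' (hw0 y).ne']
      have h2 : v * log (T' y) ≤ T' y - v + v * log v := by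
        have := log_le_sub_one_of_pos (div_pos (hT'0 y) hv0)
        rw [log_div (hT'0 y).ne' hv0.ne'] at this
        have := mul_le_mul_of_nonneg_left this hv0.le
        have h3 : (v : ℝ) * (T' y / v - 1) = T' y - v := by field_simp
        linarith
      have h3 := h (T y) y
      have h4 := hlogp (T y)
      rw [h1, hlogw y] at h2
      nlinarith
    have hi1 : Integrable (fun y => (T' y - y * T y) + f y) (gaussianReal 0 1) := hi.add hfi
    have hi2 : Integrable (fun y => ((T' y - y * T y) + f y) + (1 + v) / 2 * y ^ 2)
        (gaussianReal 0 1) := hi1.add (hsq.const_mul _)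
    have hmono := integral_mono (μ := gaussianReal 0 1) (integrable_const _)
      (hi2.add (integrable_const (v / 2 * log v - v : ℝ))) hpt
    rw [integral_const, probReal_univ, one_smul] at hmono
    have hval : ∫ y, ((T' y - y * T y) + f y) + (1 + v) / 2 * y ^ 2 +
        (v / 2 * log v - v) ∂gaussianReal 0 1 = K := by
      rw [integral_add hi2 (integrable_const _), integral_add hi1 (hsq.const_mul _),
        integral_add hi hfi, hi0, integral_const_mul, hsq1]
      simp [hK]; ring
    have hle : v * log Z ≤ K := hmono.trans hval.le
    rw [← log_le_iff_le_exp hZ0, le_div_iff₀ hv0]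
    linarith
  have hlim := intervalIntegral_tendsto_integral hpi tendsto_neg_atTop_atBot tendsto_id
  have hle : ∫ x, p x ≤ exp (K / v) :=
    le_of_tendsto hlim ((eventually_gt_atTop 0).mono hkey)
  have heq : ∫ x, exp (q x / v) ∂gaussianReal 0 v = ∫ x, p x :=
    integral_gaussianReal_eq_integral_smul hv
  have hpos : 0 < ∫ x, p x := by
    rw [integral_pos_iff_support_of_nonneg (fun x => (hp0 x).le) hpi,
      Function.support_eq_univ fun t => (hp0 t).ne']
    simp
  rw [heq]
  have := (log_le_iff_le_exp hpos).2 hle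
  rw [le_div_iff₀ hv0] at this
  linarith

theorem integral_pi_fin_succ {n : ℕ} (μ : Measure ℝ) [IsProbabilityMeasure μ]
    {F : (Fin (n + 1) → ℝ) → ℝ} (hF : Continuous F) {C : ℝ} (hC : ∀ x, |F x| ≤ C) :
    ∫ x, F x ∂Measure.pi (fun _ => μ) =
      ∫ t, ∫ x, F (Fin.cons t x) ∂Measure.pi (fun _ : Fin n => μ) ∂μ := by
  rw [← ((measurePreserving_piFinSuccAbove (fun _ : Fin (n + 1) => μ) 0).symm).integral_comp',
    integral_prod]
  · simp [MeasurableEquiv.piFinSuccAbove_symm_apply, Fin.insertNthEquiv]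
  · refine Integrable.of_bound ?_ C (.of_forall fun x => hC _)
    exact (hF.measurable.comp (MeasurableEquiv.measurable _)).aestronglyMeasurable

theorem exp_mem_Icc_of_abs_le {s A v : ℝ} (hv : 0 < v) (h : |s| ≤ A) :
    exp (s / v) ∈ Icc (exp (-A / v)) (exp (A / v)) := by
  obtain ⟨h1, h2⟩ := abs_le.1 h
  constructor <;> gcongr

theorem integral_exp_div_mem_Icc {α : Type*} [MeasurableSpace α] {μ : Measure α}
    [IsProbabilityMeasure μ] {q : α → ℝ} {A v : ℝ} (hq : Measurable q) (hv : 0 < v)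
    (hA : ∀ x, |q x| ≤ A) :
    ∫ x, exp (q x / v) ∂μ ∈ Icc (exp (-A / v)) (exp (A / v)) := by
  have hb := fun x => exp_mem_Icc_of_abs_le hv (hA x)
  have hi : Integrable (fun x => exp (q x / v)) μ := by
    refine Integrable.of_bound (by fun_prop) (exp (A / v)) (.of_forall fun x => ?_)
    rw [norm_of_nonneg (exp_pos _).le]
    exact (hb x).2
  constructor
  · simpa using integral_mono (integrable_const _) hi fun x => (hb x).1
  · simpa using integral_mono hi (integrable_const _) fun x => (hb x).2

/-- Dual form of the dimensional Talagrand inequality on a product of lines. -/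
theorem log_integral_exp_le_of_pi {v : NNReal} (hv : v ≠ 0) (n : ℕ) {q f : (Fin n → ℝ) → ℝ}
    (hq : Continuous q) (hf : Continuous f) {A B : ℝ} (hqA : ∀ x, |q x| ≤ A)
    (hfB : ∀ y, |f y| ≤ B) (h : ∀ x y, q x - f y ≤ (∑ i, (x i - y i) ^ 2) / 2) :
    v * log (∫ x, exp (q x / v) ∂Measure.pi (fun _ => gaussianReal 0 v)) ≤
      ∫ y, f y ∂Measure.pi (fun _ => gaussianReal 0 1) + n * ((1 - v + v * log v) / 2) := by
  have hv0 : (0 : ℝ) < v := by positivity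
  induction n generalizing A B with
  | zero =>
    rw [Measure.pi_of_empty _ default, Measure.pi_of_empty _ default, integral_dirac, integral_dirac,
      log_exp]
    have := h default default
    simp at this
    field_simp
    simpa using this
  | succ n ih =>
    set κ : ℝ := (1 - v + v * log v) / 2 with hκ
    have hexpb : ∀ x, |exp (q x / v)| ≤ exp (A / v) := fun x => by
      rw [abs_of_pos (exp_pos _)]; exact (exp_mem_Icc_of_abs_le hv0 (hqA x)).2
    have hqv : Continuous fun x => exp (q x / v) := by fun_prop
    rw [integral_pi_fin_succ _ hqv hexpb, integral_pi_fin_succ _ hf hfB]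
    let P : ℝ → ℝ := fun t => ∫ x, exp (q (Fin.cons t x) / v)
      ∂Measure.pi (fun _ : Fin n => gaussianReal 0 v)
    let F : ℝ → ℝ := fun t => ∫ y, f (Fin.cons t y) ∂Measure.pi (fun _ : Fin n => gaussianReal 0 1)
    have hcons₁ : ∀ x : Fin n → ℝ, Continuous fun t : ℝ => (Fin.cons t x : Fin (n + 1) → ℝ) :=
      fun x => by fun_prop
    have hcons₂ : ∀ t : ℝ, Continuous fun x : Fin n → ℝ => (Fin.cons t x : Fin (n + 1) → ℝ) :=
      fun x => by fun_prop
    have hPb : ∀ t, P t ∈ Icc (exp (-A / v)) (exp (A / v)) := fun t =>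
      integral_exp_div_mem_Icc (hq.comp (hcons₂ t)).measurable hv0 fun x => hqA _
    have hP0 : ∀ t, 0 < P t := fun t => (exp_pos _).trans_le (hPb t).1
    have hPc : Continuous P := continuous_of_dominated (bound := fun _ => exp (A / v))
      (fun t => (hqv.comp (hcons₂ t)).aestronglyMeasurable)
      (fun t => .of_forall fun x => hexpb _) (integrable_const _)
      (.of_forall fun x => hqv.comp (hcons₁ x))
    have hFc : Continuous F := continuous_of_dominated (bound := fun _ => B)
      (fun t => (hf.comp (hcons₂ t)).aestronglyMeasurable)
      (fun t => .of_forall fun x => hfB _) (integrable_const _)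
      (.of_forall fun x => hf.comp (hcons₁ x))
    have hFb : ∀ t, |F t| ≤ B := fun t => by
      simpa using norm_integral_le_of_norm_le_const
        (μ := Measure.pi fun _ : Fin n => gaussianReal 0 1) (f := fun y => f (Fin.cons t y))
        (.of_forall fun y => hfB _)
    have hQb : ∀ t, |v * log (P t)| ≤ A := fun t => by
      have h1 := (le_log_iff_exp_le (hP0 t)).2 (hPb t).1
      have h2 := (log_le_iff_le_exp (hP0 t)).2 (hPb t).2
      rw [div_le_iff₀ hv0] at h1
      rw [le_div_iff₀ hv0] at h2
      exact abs_le.2 ⟨by linarith, by linarith⟩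
    have hexpQ : ∀ t, exp (v * log (P t) / v) = P t := fun t => by
      rw [mul_div_cancel_left₀ _ hv0.ne', exp_log (hP0 t)]
    have hstep : ∀ s t, v * log (P s) - (F t + n * κ) ≤ (s - t) ^ 2 / 2 := by
      intro s t
      have := ih (q := fun x => q (Fin.cons s x)) (f := fun y => f (Fin.cons t y) + (s - t) ^ 2 / 2)
        (hq.comp (hcons₂ s)) ((hf.comp (hcons₂ t)).add continuous_const)
        (A := A) (B := B + (s - t) ^ 2 / 2) (fun x => hqA _)
        (fun y => (abs_add_le _ _).trans (add_le_add (hfB _) (abs_of_nonneg (by positivity)).le))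
        (fun x y => by
          have := h (Fin.cons s x) (Fin.cons t y)
          simp only [Fin.sum_univ_succ, Fin.cons_zero, Fin.cons_succ] at this
          linarith)
      have hfi : Integrable (fun y => f (Fin.cons t y))
          (Measure.pi fun _ : Fin n => gaussianReal 0 1) :=
        Integrable.of_bound (hf.comp (hcons₂ t)).aestronglyMeasurable B (.of_forall fun y => hfB _)
      rw [integral_add hfi (integrable_const _)] at this
      simp only [integral_const, probReal_univ, one_smul] at this
      simp only [P, F]
      linarith
    have hmain := log_integral_exp_le_of_real hv (q := fun t => v * log (P t))
      (f := fun t => F t + n * κ) (continuous_const.mul (hPc.log fun t => (hP0 t).ne'))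
      (hFc.add continuous_const) (A := A) (B := B + |n * κ|) hQb
      (fun t => (abs_add_le _ _).trans (add_le_add (hFb t) le_rfl)) hstep
    simp only [hexpQ] at hmain
    rw [integral_add (Integrable.of_bound hFc.aestronglyMeasurable B (.of_forall hFb))
      (integrable_const _)] at hmain
    simp only [integral_const, probReal_univ, one_smul] at hmain
    push_cast
    linarith

theorem pi_gaussianReal_eq_withDensity {v : NNReal} (hv : v ≠ 0) (n : ℕ) :
    Measure.pi (fun _ : Fin n => gaussianReal 0 v) =
      volume.withDensity fun x => ENNReal.ofReal (∏ i, gaussianPDFReal 0 v (x i)) := by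
  refine Measure.pi_eq fun s hs => ?_
  have hbox : MeasurableSet (univ.pi s) := MeasurableSet.univ_pi hs
  have hnn : ∀ i x, 0 ≤ (s i).indicator (gaussianPDFReal 0 v) x := fun i x =>
    indicator_nonneg (fun x _ => gaussianPDFReal_nonneg 0 v x) x
  have hind : ∀ x : Fin n → ℝ, (univ.pi s).indicator
      (fun x => ENNReal.ofReal (∏ i, gaussianPDFReal 0 v (x i))) x =
        ENNReal.ofReal (∏ i, (s i).indicator (gaussianPDFReal 0 v) (x i)) := by
    intro x
    by_cases hx : x ∈ univ.pi s
    · rw [indicator_of_mem hx]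
      congr 1
      exact Finset.prod_congr rfl fun i _ => (indicator_of_mem (hx i (mem_univ i)) _).symm
    · rw [indicator_of_notMem hx]
      obtain ⟨i, hi⟩ : ∃ i, x i ∉ s i := by simpa [mem_univ_pi] using hx
      rw [Finset.prod_eq_zero (Finset.mem_univ i) (indicator_of_notMem hi _), ENNReal.ofReal_zero]
  rw [withDensity_apply _ hbox, ← lintegral_indicator hbox]
  simp_rw [hind]
  rw [← ofReal_integral_eq_lintegral_ofReal, integral_fintype_prod_volume_eq_prod,
    ENNReal.ofReal_prod_of_nonneg]
  · refine Finset.prod_congr rfl fun i _ => ?_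
    rw [integral_indicator (hs i), gaussianReal_apply_eq_integral 0 hv]
  · exact fun i _ => integral_nonneg (hnn i)
  · exact Integrable.fintype_prod_dep fun i => (integrable_gaussianPDFReal 0 v).indicator (hs i)
  · exact .of_forall fun x => Finset.prod_nonneg fun i _ => hnn i _

theorem integral_pi_gaussianReal {v : NNReal} (hv : v ≠ 0) (n : ℕ)
    (F : EuclideanSpace ℝ (Fin n) → ℝ) :
    ∫ y, F (WithLp.toLp 2 y) ∂Measure.pi (fun _ : Fin n => gaussianReal 0 v) =
      (2 * π * v) ^ (-(n : ℝ) / 2) * ∫ x, exp (-‖x‖ ^ 2 / (2 * v)) * F x := by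
  have hprod : ∀ y : Fin n → ℝ, ∏ i, gaussianPDFReal 0 v (y i) =
      (2 * π * v) ^ (-(n : ℝ) / 2) * exp (-‖WithLp.toLp 2 y‖ ^ 2 / (2 * v)) := by
    intro y
    simp only [gaussianPDFReal, Finset.prod_mul_distrib, ← exp_sum, Finset.prod_const,
      Finset.card_univ, Fintype.card_fin, sub_zero]
    congr 1
    · rw [sqrt_eq_rpow, ← rpow_neg (by positivity), ← rpow_natCast, ← rpow_mul (by positivity)]
      congr 1; ring
    · rw [EuclideanSpace.norm_sq_eq]
      simp [← Finset.sum_div]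
  rw [pi_gaussianReal_eq_withDensity hv, integral_withDensity_eq_integral_toReal_smul₀]
  · rw [← integral_const_mul, ← (PiLp.volume_preserving_toLp (Fin n)).integral_comp
      (MeasurableEquiv.toLp 2 _).measurableEmbedding]
    refine integral_congr_ae (.of_forall fun y => ?_)
    simp only
    rw [ENNReal.toReal_ofReal (Finset.prod_nonneg fun i _ => gaussianPDFReal_nonneg 0 v _), hprod,
      smul_eq_mul, mul_assoc]
  · refine Measurable.aemeasurable (ENNReal.measurable_ofReal.comp ?_)
    exact Finset.measurable_prod _ fun i _ =>
      (measurable_gaussianPDFReal 0 v).comp (measurable_pi_apply i)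
  · exact .of_forall fun _ => ENNReal.ofReal_lt_top

theorem integral_gaussianMeasure (n : ℕ) (F : EuclideanSpace ℝ (Fin n) → ℝ) :
    ∫ x, F x ∂gaussianMeasure n = (2 * π) ^ (-(n : ℝ) / 2) * ∫ x, exp (-‖x‖ ^ 2 / 2) * F x := by
  rw [gaussianMeasure, integral_withDensity_eq_integral_toReal_smul₀, ← integral_const_mul]
  · refine integral_congr_ae (.of_forall fun y => ?_)
    simp only
    rw [ENNReal.toReal_ofReal (by positivity), smul_eq_mul, mul_assoc]
  · fun_prop
  · exact .of_forall fun _ => ENNReal.ofReal_lt_top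

theorem integrable_gaussianMeasure_iff {n : ℕ} {F : EuclideanSpace ℝ (Fin n) → ℝ} :
    Integrable F (gaussianMeasure n) ↔ Integrable fun x => exp (-‖x‖ ^ 2 / 2) * F x := by
  have hc : IsUnit ((2 * π) ^ (-(n : ℝ) / 2)) := (by positivity : _ ≠ (0 : ℝ)).isUnit
  rw [gaussianMeasure, integrable_withDensity_iff_integrable_smul₀' (by fun_prop)
    (.of_forall fun _ => ENNReal.ofReal_lt_top), ← integrable_const_mul_iff hc fun x => _ * F x]
  refine integrable_congr (.of_forall fun y => ?_)
  simp only
  rw [ENNReal.toReal_ofReal (by positivity), smul_eq_mul, mul_assoc]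

theorem integral_gaussianMeasure_eq_pi (n : ℕ) (F : EuclideanSpace ℝ (Fin n) → ℝ) :
    ∫ x, F x ∂gaussianMeasure n =
      ∫ y, F (WithLp.toLp 2 y) ∂Measure.pi (fun _ : Fin n => gaussianReal 0 1) := by
  rw [integral_pi_gaussianReal one_ne_zero, integral_gaussianMeasure]
  simp

theorem integrable_exp_neg_mul_norm_sq (n : ℕ) {b : ℝ} (hb : 0 < b) :
    Integrable fun x : EuclideanSpace ℝ (Fin n) => exp (-b * ‖x‖ ^ 2) := by
  have := (GaussianFourier.integrable_cexp_neg_mul_sq_norm_add (V := EuclideanSpace ℝ (Fin n))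
    (b := b) (by simpa) 0 0).norm
  refine this.congr (.of_forall fun x => ?_)
  simp [Complex.norm_exp, ← Complex.ofReal_pow]

/-- Functions of at most quadratic growth are integrable against a Gaussian weight. -/
theorem integrable_exp_mul_of_le_one_add_sq {n : ℕ} {F : EuclideanSpace ℝ (Fin n) → ℝ}
    (hF : Continuous F) {C : ℝ} (hC : ∀ x, |F x| ≤ C * (1 + ‖x‖ ^ 2)) :
    Integrable fun x => exp (-‖x‖ ^ 2 / 2) * F x := by
  refine ((integrable_exp_neg_mul_norm_sq n (b := 1 / 4) (by norm_num)).const_mul (4 * C)).mono'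
    (by fun_prop) (.of_forall fun x => ?_)
  have hC0 : 0 ≤ C := by
    have := (abs_nonneg _).trans (hC 0)
    simpa using this
  rw [norm_mul, norm_of_nonneg (exp_pos _).le, norm_eq_abs]
  have h1 : 1 + ‖x‖ ^ 2 ≤ 4 * exp (1 / 4 * ‖x‖ ^ 2) := by
    have := add_one_le_exp (1 / 4 * ‖x‖ ^ 2)
    linarith
  calc exp (-‖x‖ ^ 2 / 2) * |F x|
      ≤ exp (-‖x‖ ^ 2 / 2) * (C * (4 * exp (1 / 4 * ‖x‖ ^ 2))) := by
        gcongr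
        exact (hC x).trans (by gcongr)
    _ = 4 * C * (exp (-‖x‖ ^ 2 / 2) * exp (1 / 4 * ‖x‖ ^ 2)) := by ring
    _ = 4 * C * exp (-(1 / 4) * ‖x‖ ^ 2) := by rw [← exp_add]; congr 2; ring

theorem hasFDerivAt_exp_neg_norm_sq {n : ℕ} (x : EuclideanSpace ℝ (Fin n)) :
    HasFDerivAt (fun x : EuclideanSpace ℝ (Fin n) => exp (-‖x‖ ^ 2 / 2))
      (-exp (-‖x‖ ^ 2 / 2) • innerSL ℝ x) x := by
  have h := ((hasStrictFDerivAt_norm_sq x).hasFDerivAt.const_mul (-1 / 2 : ℝ)).exp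
  have heq : (fun x : EuclideanSpace ℝ (Fin n) => exp (-‖x‖ ^ 2 / 2)) =
      fun x => exp (-1 / 2 * ‖x‖ ^ 2) := by
    funext x; congr 1; ring
  rw [heq]
  refine h.congr_fderiv ?_
  ext y
  simp
  ring_nf

theorem norm_fderiv_fderiv_eq {E F : Type*} [NormedAddCommGroup E] [NormedSpace ℝ E]
    [NormedAddCommGroup F] [NormedSpace ℝ F] (g : E → F) (x : E) :
    ‖fderiv ℝ (fderiv ℝ g) x‖ = ‖iteratedFDeriv ℝ 2 g x‖ := by
  rw [← norm_iteratedFDeriv_fderiv, ← norm_iteratedFDeriv_one]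

/-- Gaussian integration by parts for a second derivative in a coordinate direction. -/
theorem integral_exp_mul_second_deriv {n : ℕ} {g : EuclideanSpace ℝ (Fin n) → ℝ}
    (hg : ContDiff ℝ 2 g) {C C₂ : ℝ} (hC : ∀ x, |g x| ≤ C)
    (hC₂ : ∀ x, ‖iteratedFDeriv ℝ 2 g x‖ ≤ C₂) (i : Fin n) :
    Integrable (fun x => exp (-‖x‖ ^ 2 / 2) *
        fderiv ℝ (fderiv ℝ g) x (EuclideanSpace.single i 1) (EuclideanSpace.single i 1)) ∧
      Integrable (fun x => exp (-‖x‖ ^ 2 / 2) * ((x i ^ 2 - 1) * g x)) ∧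
      ∫ x, exp (-‖x‖ ^ 2 / 2) *
        fderiv ℝ (fderiv ℝ g) x (EuclideanSpace.single i 1) (EuclideanSpace.single i 1) =
      ∫ x, exp (-‖x‖ ^ 2 / 2) * ((x i ^ 2 - 1) * g x) := by
  set e : EuclideanSpace ℝ (Fin n) := EuclideanSpace.single i 1 with he
  have hen : ‖e‖ = 1 := by simp [he]
  have hinner : ∀ x : EuclideanSpace ℝ (Fin n), inner ℝ x e = x i := fun x => by
    simp [he, EuclideanSpace.inner_single_right]
  have hC0 : 0 ≤ C := (abs_nonneg _).trans (hC 0)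
  have hC₂0 : 0 ≤ C₂ := (norm_nonneg _).trans (hC₂ 0)
  have hxi : ∀ x : EuclideanSpace ℝ (Fin n), |x i| ≤ ‖x‖ := fun x => PiLp.norm_apply_le x i
  have hdg : ContDiff ℝ 1 (fderiv ℝ g) := hg.fderiv_right (by norm_num)
  have hddg : Continuous (fderiv ℝ (fderiv ℝ g)) := hdg.continuous_fderiv (by norm_num)
  have hdd : ∀ x, ‖fderiv ℝ (fderiv ℝ g) x‖ ≤ C₂ := fun x =>
    (norm_fderiv_fderiv_eq g x).trans_le (hC₂ x)
  have hgd : Differentiable ℝ g := hg.differentiable (by norm_num)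
  have hdgd : Differentiable ℝ (fderiv ℝ g) := hdg.differentiable (by norm_num)
  have hlin : ∀ x, ‖fderiv ℝ g x‖ ≤ ‖fderiv ℝ g 0‖ + C₂ * ‖x‖ := by
    intro x
    have h1 := Convex.norm_image_sub_le_of_norm_fderiv_le (𝕜 := ℝ) (f := fderiv ℝ g)
      (fun x _ => hdgd x) (fun x _ => hdd x) convex_univ (mem_univ 0) (mem_univ x)
    rw [sub_zero] at h1
    have h2 := norm_add_le (fderiv ℝ g 0) (fderiv ℝ g x - fderiv ℝ g 0)
    rw [add_sub_cancel] at h2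
    linarith
  have hgi : ∀ x, |fderiv ℝ g x e| ≤ ‖fderiv ℝ g 0‖ + C₂ * ‖x‖ := fun x => by
    have := (fderiv ℝ g x).le_opNorm e
    rw [hen, mul_one] at this
    exact this.trans (hlin x)
  set D := ‖fderiv ℝ g 0‖ with hD
  have hD0 : 0 ≤ D := norm_nonneg _
  let w : EuclideanSpace ℝ (Fin n) → ℝ := fun x => exp (-‖x‖ ^ 2 / 2)
  have hw : ∀ x, HasFDerivAt w (-w x • innerSL ℝ x) x := hasFDerivAt_exp_neg_norm_sq
  have hwe : ∀ x, fderiv ℝ w x e = -(x i * w x) := fun x => by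
    rw [(hw x).fderiv]; simp [hinner, mul_comm]
  have hxw : ∀ x, HasFDerivAt (fun x => x i * w x)
      (x i • (-w x • innerSL ℝ x) + w x • EuclideanSpace.proj i) x := fun x =>
    HasFDerivAt.mul (EuclideanSpace.proj i : EuclideanSpace ℝ (Fin n) →L[ℝ] ℝ).hasFDerivAt (hw x)
  have hxwe : ∀ x, fderiv ℝ (fun x => x i * w x) x e = w x * (1 - x i ^ 2) := fun x => by
    have hei : e i = 1 := by simp [he]
    rw [(hxw x).fderiv]
    simp [hinner, hei]
    ring
  have hgie : ∀ x, fderiv ℝ (fun x => fderiv ℝ g x e) x e = fderiv ℝ (fderiv ℝ g) x e e := by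
    intro x
    rw [fderiv_clm_apply (hdgd x) (differentiableAt_const e)]
    simp
  have hgic2 : Continuous fun x => fderiv ℝ (fderiv ℝ g) x e e :=
    (hddg.clm_apply continuous_const).clm_apply continuous_const
  have hI1 : Integrable fun x => w x * fderiv ℝ (fderiv ℝ g) x e e := by
    refine integrable_exp_mul_of_le_one_add_sq hgic2 (C := C₂) fun x => ?_
    have h1 := (fderiv ℝ (fderiv ℝ g) x).le_opNorm₂ e e
    rw [hen, mul_one, mul_one] at h1
    have := (h1.trans (hdd x))
    rw [norm_eq_abs] at this
    nlinarith [sq_nonneg ‖x‖]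
  have hI2 : Integrable fun x => w x * (x i * fderiv ℝ g x e) := by
    refine integrable_exp_mul_of_le_one_add_sq (by fun_prop) (C := D + C₂) fun x => ?_
    rw [abs_mul]
    have := mul_le_mul (hxi x) (hgi x) (abs_nonneg _) (norm_nonneg _)
    nlinarith [sq_nonneg (‖x‖ - 1), norm_nonneg x]
  have hI3 : Integrable fun x => w x * fderiv ℝ g x e := by
    refine integrable_exp_mul_of_le_one_add_sq (by fun_prop) (C := D + C₂) fun x => ?_
    have := hgi x
    nlinarith [sq_nonneg (‖x‖ - 1), sq_nonneg ‖x‖]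
  have hI4 : Integrable fun x => w x * ((x i ^ 2 - 1) * g x) := by
    refine integrable_exp_mul_of_le_one_add_sq (by fun_prop) (C := C) fun x => ?_
    have h1 : |x i ^ 2 - 1| ≤ 1 + ‖x‖ ^ 2 := by
      have := sq_le_sq' (by linarith [abs_nonneg (x i), norm_nonneg x]) (hxi x)
      rw [sq_abs] at this
      exact abs_le.2 ⟨by nlinarith [sq_nonneg (x i), sq_nonneg ‖x‖], by linarith⟩
    rw [abs_mul, mul_comm]
    exact mul_le_mul (hC x) h1 (abs_nonneg _) hC0
  have hI5 : Integrable fun x => w x * (x i * g x) := by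
    refine integrable_exp_mul_of_le_one_add_sq (by fun_prop) (C := C) fun x => ?_
    rw [abs_mul, mul_comm]
    refine mul_le_mul (hC x) ?_ (abs_nonneg _) hC0
    nlinarith [hxi x, sq_nonneg (‖x‖ - 1), sq_nonneg ‖x‖]
  have hS1 : ∫ x, w x * fderiv ℝ (fderiv ℝ g) x e e = ∫ x, w x * (x i * fderiv ℝ g x e) := by
    have := integral_mul_fderiv_eq_neg_fderiv_mul_of_integrable (μ := volume) (f := w)
      (g := fun x => fderiv ℝ g x e) (v := e) ?_ ?_ hI3 (fun x _ => (hw x).differentiableAt)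
      (fun x _ => (hdgd x).clm_apply (differentiableAt_const e))
    · simp only [hgie, hwe] at this
      rw [this, ← integral_neg]
      congr 1 with x; ring
    · simp only [hwe]
      exact hI2.neg.congr (.of_forall fun x => by simp; ring)
    · simpa only [hgie] using hI1
  have hS2 : ∫ x, w x * (x i * fderiv ℝ g x e) = ∫ x, w x * ((x i ^ 2 - 1) * g x) := by
    have := integral_mul_fderiv_eq_neg_fderiv_mul_of_integrable (μ := volume)
      (f := fun x => x i * w x) (g := g) (v := e) ?_ ?_ ?_ (fun x _ => (hxw x).differentiableAt)
      (fun x _ => hgd x)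
    · simp only [hxwe] at this
      rw [← integral_neg] at this
      calc ∫ x, w x * (x i * fderiv ℝ g x e) = ∫ x, x i * w x * fderiv ℝ g x e := by
            congr 1 with x; ring
        _ = _ := this
        _ = _ := by congr 1 with x; ring
    · simp only [hxwe]
      exact hI4.neg.congr (.of_forall fun x => by simp; ring)
    · exact hI2.congr (.of_forall fun x => by simp; ring)
    · exact hI5.congr (.of_forall fun x => by simp; ring)
  exact ⟨hI1, hI4, hS1.trans hS2⟩

theorem integral_laplacian_gaussianMeasure {n : ℕ} {g : EuclideanSpace ℝ (Fin n) → ℝ}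
    (hg : ContDiff ℝ 2 g) {C C₂ : ℝ} (hC : ∀ x, |g x| ≤ C)
    (hC₂ : ∀ x, ‖iteratedFDeriv ℝ 2 g x‖ ≤ C₂) :
    ∫ x, laplacian n g x ∂gaussianMeasure n =
      ∫ x, (‖x‖ ^ 2 - n) * g x ∂gaussianMeasure n := by
  have hibp := integral_exp_mul_second_deriv hg hC hC₂
  have h1 : ∀ x, exp (-‖x‖ ^ 2 / 2) * laplacian n g x = ∑ i, exp (-‖x‖ ^ 2 / 2) *
      fderiv ℝ (fderiv ℝ g) x (EuclideanSpace.single i 1) (EuclideanSpace.single i 1) :=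
    fun x => Finset.mul_sum _ _ _
  have h2 : ∀ x, exp (-‖x‖ ^ 2 / 2) * ((‖x‖ ^ 2 - n) * g x) =
      ∑ i, exp (-‖x‖ ^ 2 / 2) * ((x i ^ 2 - 1) * g x) := fun x => by
    rw [← Finset.mul_sum, ← Finset.sum_mul, Finset.sum_sub_distrib, EuclideanSpace.norm_sq_eq]
    simp
  simp only [integral_gaussianMeasure, h1, h2]
  rw [integral_finsetSum, integral_finsetSum]
  · exact congrArg _ (Finset.sum_congr rfl fun i _ => (hibp i).2.2)
  · exact fun i _ => (hibp i).2.1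
  · exact fun i _ => (hibp i).1

section HopfLax

variable {n : ℕ} {f : EuclideanSpace ℝ (Fin n) → ℝ} {C : ℝ}

theorem hopfLax_one_le (hf : ∀ x, |f x| ≤ C) (x y : EuclideanSpace ℝ (Fin n)) :
    hopfLax n 1 f x ≤ f y + ‖x - y‖ ^ 2 / 2 := by
  have hbdd : BddBelow (range fun y => f y + ‖x - y‖ ^ 2 / (2 * 1)) := by
    refine ⟨-C, ?_⟩
    rintro _ ⟨y, rfl⟩
    have := (abs_le.1 (hf y)).1
    have : 0 ≤ ‖x - y‖ ^ 2 / (2 * 1) := by positivity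
    simp only; linarith
  simpa [hopfLax] using ciInf_le hbdd y

theorem abs_hopfLax_one_le (hf : ∀ x, |f x| ≤ C) (x : EuclideanSpace ℝ (Fin n)) :
    |hopfLax n 1 f x| ≤ C := by
  refine abs_le.2 ⟨le_ciInf fun y => ?_, ?_⟩
  · have := (abs_le.1 (hf y)).1
    have : 0 ≤ ‖x - y‖ ^ 2 / (2 * 1) := by positivity
    linarith
  · have := hopfLax_one_le hf x x
    simp at this
    exact this.trans (abs_le.1 (hf x)).2

theorem lipschitzWith_hopfLax_one (hf : ∀ x, |f x| ≤ C) {L : NNReal} (hL : LipschitzWith L f) :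
    LipschitzWith L (hopfLax n 1 f) := by
  refine LipschitzWith.of_le_add_mul L fun x x' => ?_
  rw [← sub_le_iff_le_add]
  refine le_ciInf fun y => ?_
  have h1 := hopfLax_one_le hf x (y + (x - x'))
  have h2 := hL.dist_le_mul (y + (x - x')) y
  have h3 : x - (y + (x - x')) = x' - y := by abel
  rw [h3] at h1
  rw [dist_eq_norm, dist_eq_norm, add_sub_cancel_left] at h2
  rw [dist_eq_norm, mul_one]
  have := le_abs_self (f (y + (x - x')) - f y)
  rw [norm_eq_abs] at h2
  linarith

end HopfLax

/-- Gibbs variational inequality for the relative entropy. -/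
theorem integral_mul_le_entropy_add_log {α : Type*} [MeasurableSpace α] {μ : Measure α}
    {g u : α → ℝ} (hg0 : ∀ x, 0 < g x) (hg1 : ∫ x, g x ∂μ = 1)
    (hent : Integrable (fun x => g x * log (g x)) μ) (hug : Integrable (fun x => u x * g x) μ)
    (hexp : Integrable (fun x => exp (u x)) μ) :
    ∫ x, u x * g x ∂μ ≤ ∫ x, g x * log (g x) ∂μ + log (∫ x, exp (u x) ∂μ) := by
  have hgi : Integrable g μ := by
    by_contra h
    rw [integral_undef h] at hg1
    exact zero_ne_one hg1
  have : NeZero μ := ⟨by rintro rfl; simp at hg1⟩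
  set Z := ∫ x, exp (u x) ∂μ with hZ
  have hZ0 : 0 < Z := integral_exp_pos hexp
  have hpt : ∀ x, u x * g x ≤ (g x * log (g x) + (log Z - 1) * g x) + exp (u x) / Z := by
    intro x
    have h1 := add_one_le_exp (u x - log Z - log (g x))
    rw [exp_sub, exp_sub, exp_log hZ0, exp_log (hg0 x), le_div_iff₀ (hg0 x)] at h1
    linarith
  have hi1 : Integrable (fun x => g x * log (g x) + (log Z - 1) * g x) μ :=
    hent.add (hgi.const_mul _)
  have := integral_mono hug (hi1.add (hexp.div_const Z)) hpt
  refine this.trans_eq ?_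
  simp only [Pi.add_apply]
  rw [integral_add hi1 (hexp.div_const Z), integral_add hent (hgi.const_mul _), integral_const_mul,
    integral_div, hg1, ← hZ, div_self hZ0.ne']
  ring

theorem refined_talagrand_dual_form (n : ℕ) (hn : 1 ≤ n) (lam : ℝ) (hlam : 0 < lam)
    (f : EuclideanSpace ℝ (Fin n) → ℝ) (L : NNReal) (hLip : LipschitzWith L f)
    (Cf : ℝ) (hbdf : ∀ x, |f x| ≤ Cf)
    (g : EuclideanSpace ℝ (Fin n) → ℝ) (hg : ContDiff ℝ (⊤ : ℕ∞) g)
    (hgpos : ∀ x, 0 < g x) (Cg : ℝ) (hbdg : ∀ x, g x ≤ Cg)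
    (C₂ : ℝ) (hder : ∀ x, ‖iteratedFDeriv ℝ 2 g x‖ ≤ C₂)
    (hmass : ∫ x, g x ∂(gaussianMeasure n) = 1) :
    ∫ x, hopfLax n 1 f x * g x ∂(gaussianMeasure n) - ∫ x, f x ∂(gaussianMeasure n) ≤
      lam * ∫ x, g x * Real.log (g x) ∂(gaussianMeasure n) +
        n * (1 - lam + lam * Real.log lam) +
        (1 / 2) * (1 - lam) * ∫ x, laplacian n g x ∂(gaussianMeasure n) := by
  have hg2 : ContDiff ℝ 2 g := contDiff_infty.mp hg 2
  have hgc := hg.continuous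
  have hgabs : ∀ x, |g x| ≤ Cg := fun x => (abs_of_pos (hgpos x)).trans_le (hbdg x)
  have hCg : 0 ≤ Cg := (hgpos 0).le.trans (hbdg 0)
  have hCf : 0 ≤ Cf := (abs_nonneg _).trans (hbdf 0)
  let q := hopfLax n 1 f
  have hqc : Continuous q := (lipschitzWith_hopfLax_one hbdf hLip).continuous
  have hqb : ∀ x, |q x| ≤ Cf := abs_hopfLax_one_le hbdf
  have hintegrable : ∀ {F : EuclideanSpace ℝ (Fin n) → ℝ} (C : ℝ), Continuous F →
      (∀ x, |F x| ≤ C * (1 + ‖x‖ ^ 2)) → Integrable F (gaussianMeasure n) := fun C hF hC =>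
    integrable_gaussianMeasure_iff.2 (integrable_exp_mul_of_le_one_add_sq hF hC)
  have hgi : Integrable g (gaussianMeasure n) := hintegrable Cg hgc fun x =>
    (hgabs x).trans (le_mul_of_one_le_right hCg (by linarith [sq_nonneg ‖x‖]))
  have hsqg : Integrable (fun x => ‖x‖ ^ 2 * g x) (gaussianMeasure n) :=
    hintegrable Cg (by fun_prop) fun x => by
      rw [abs_mul, abs_of_nonneg (sq_nonneg _), mul_comm]
      exact mul_le_mul (hgabs x) (by linarith) (sq_nonneg _) hCg
  have hqg : Integrable (fun x => q x * g x) (gaussianMeasure n) :=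
    hintegrable (Cf * Cg) (by fun_prop) fun x => by
      rw [abs_mul]
      exact (mul_le_mul (hqb x) (hgabs x) (abs_nonneg _) hCf).trans
        (le_mul_of_one_le_right (by positivity) (by linarith [sq_nonneg ‖x‖]))
  have hent : Integrable (fun x => g x * log (g x)) (gaussianMeasure n) := by
    obtain ⟨M, hM⟩ := (isCompact_Icc (a := (0 : ℝ)) (b := Cg)).exists_bound_of_continuousOn
      continuous_mul_log.continuousOn
    have hM' : ∀ x, |g x * log (g x)| ≤ M := fun x => hM _ ⟨(hgpos x).le, hbdg x⟩
    refine hintegrable M (continuous_mul_log.comp hgc) fun x => (hM' x).trans ?_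
    exact le_mul_of_one_le_right ((abs_nonneg _).trans (hM' x)) (by linarith [sq_nonneg ‖x‖])
  -- The dual inequality for the Gaussian measure with covariance `lam • 1`.
  let v : NNReal := ⟨lam, hlam.le⟩
  have hv : v ≠ 0 := fun h => hlam.ne' (congrArg NNReal.toReal h)
  have hvl : (v : ℝ) = lam := rfl
  have hdual := log_integral_exp_le_of_pi hv n (q := fun y => q (WithLp.toLp 2 y))
    (f := fun y => f (WithLp.toLp 2 y)) (by fun_prop)
    (hLip.continuous.comp (by fun_prop)) (fun _ => hqb _) (fun _ => hbdf _) (fun x y => by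
      have := hopfLax_one_le hbdf (WithLp.toLp 2 x) (WithLp.toLp 2 y)
      rw [EuclideanSpace.norm_sq_eq] at this
      simp only [PiLp.sub_apply, norm_eq_abs, sq_abs] at this
      linarith)
  rw [← integral_gaussianMeasure_eq_pi, hvl] at hdual
  -- Comparison of the two exponential integrals.
  let u : EuclideanSpace ℝ (Fin n) → ℝ := fun x => (q x - (1 - lam) / 2 * ‖x‖ ^ 2) / lam
  have hweight : ∀ x, exp (-‖x‖ ^ 2 / 2) * exp (u x) =
      exp (-‖x‖ ^ 2 / (2 * lam)) * exp (q x / lam) := fun x => by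
    rw [← exp_add, ← exp_add]
    congr 1
    simp only [u]; field_simp; ring
  have hexpi : Integrable (fun x => exp (u x)) (gaussianMeasure n) := by
    rw [integrable_gaussianMeasure_iff]
    simp only [hweight]
    have hb : 0 < 1 / (2 * lam) := by positivity
    refine Integrable.mul_bdd (c := exp (Cf / lam)) ?_ (by fun_prop) (.of_forall fun x => ?_)
    · refine (integrable_exp_neg_mul_norm_sq n hb).congr (.of_forall fun x => ?_)
      simp only; congr 1; ring
    · rw [norm_of_nonneg (exp_pos _).le]
      exact (exp_mem_Icc_of_abs_le hlam (hqb x)).2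
  set P := ∫ y, exp (q (WithLp.toLp 2 y) / lam) ∂Measure.pi (fun _ : Fin n => gaussianReal 0 v)
    with hP
  have hP0 : 0 < P := (exp_pos _).trans_le
    (integral_exp_div_mem_Icc (q := fun y => q (WithLp.toLp 2 y)) (A := Cf)
      (Continuous.measurable (by fun_prop)) hlam fun _ => hqb _).1
  have hZ : ∫ x, exp (u x) ∂gaussianMeasure n = lam ^ ((n : ℝ) / 2) * P := by
    rw [hP, integral_pi_gaussianReal hv n fun x => exp (q x / lam), integral_gaussianMeasure, hvl]
    simp only [hweight]
    rw [mul_rpow (by positivity) hlam.le, neg_div, rpow_neg hlam.le]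
    field_simp
  have hgibbs := integral_mul_le_entropy_add_log (u := u) hgpos hmass hent ?_ hexpi
  swap
  · refine ((hqg.sub (hsqg.const_mul ((1 - lam) / 2))).div_const lam).congr (.of_forall fun x => ?_)
    simp [u]; ring
  have hug : ∫ x, u x * g x ∂gaussianMeasure n = (∫ x, q x * g x ∂gaussianMeasure n -
      (1 - lam) / 2 * ∫ x, ‖x‖ ^ 2 * g x ∂gaussianMeasure n) / lam := by
    rw [← integral_const_mul, ← integral_sub hqg (hsqg.const_mul _), ← integral_div]
    congr 1 with x
    simp only [u]; ring
  have hlap : ∫ x, laplacian n g x ∂gaussianMeasure n =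
      ∫ x, ‖x‖ ^ 2 * g x ∂gaussianMeasure n - n := by
    rw [integral_laplacian_gaussianMeasure hg2 hgabs hder]
    simp only [sub_mul]
    rw [integral_sub hsqg (hgi.const_mul _), integral_const_mul, hmass, mul_one]
  rw [hug, hZ, log_mul (by positivity) hP0.ne', log_rpow hlam, div_le_iff₀ hlam] at hgibbs
  rw [hlap]
  change ∫ x, q x * g x ∂gaussianMeasure n - _ ≤ _
  linarith
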